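/- Let N ≥ 1, let U₁, …, U_N be 2×2 complex unitary matrices, and let w₁, …, w_N be nonnegative reals summing to 1. Consider the encryption scheme E(ρ) = Σₖ wₖ Uₖ ρ Uₖ†. Then there exist nonnegative reals (p_I, p_X, p_Y, p_Z) summing to 1 such that the Pauli scheme P(ρ) = p_I ρ + p_X XρX + p_Y YρY + p_Z ZρZ satisfies: (a) the Shannon entropy of (p_I, p_X, p_Y, p_Z) is at most the Shannon entropy of (w₁,…,w_N), and (b) for every single-qubit density matrix ρ, ‖P(ρ) − (1/2)I‖_∞ ≤ sup over single-qubit density matrices σ of ‖E(σ) − (1/2)I‖_∞. That is, Pauli encryption schemes are no worse than general single-qubit encryption schemes: any scheme can be replaced by a Pauli scheme using no more entropy and achieving approximation at least as good in the operator norm. -/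

import Mathlib

open Matrix
open scoped ComplexOrder

noncomputable section

/-- The Pauli matrix X. -/
def PX : Matrix (Fin 2) (Fin 2) ℂ := !![0, 1; 1, 0]
/-- The Pauli matrix Y. -/
def PY : Matrix (Fin 2) (Fin 2) ℂ := !![0, -Complex.I; Complex.I, 0]
/-- The Pauli matrix Z. -/
def PZ : Matrix (Fin 2) (Fin 2) ℂ := !![1, 0; 0, -1]

/-- The operator norm of a matrix, i.e. the norm of the induced operator on Euclidean space;
for a Hermitian matrix this is the maximum of the absolute values of its eigenvalues. -/
def opNorm {m : Type*} [Fintype m] [DecidableEq m] (A : Matrix m m ℂ) : ℝ :=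
  ‖Matrix.toEuclideanCLM (𝕜 := ℂ) A‖

/-- `−p·log₂ p`, one term of the Shannon entropy (equals `0` at `p = 0`). -/
def nmlb (p : ℝ) : ℝ := -(p * Real.logb 2 p)

/-!
Up to a phase, a single-qubit unitary is a unit quaternion, so the scheme is a set of vectors
`√wₖ qₖ` in `ℝ⁴`, the rows of a real matrix `A`. Diagonalise the Gram matrix: `B = A O` with `O`
orthogonal and `Bᵀ B = diag p`. The change of basis mixes the Kraus operators, so the scheme is
also `σ ↦ ∑ⱼ pⱼ Qⱼ σ Qⱼ†`, where the `Qⱼ` are the quaternions in the columns of `O`.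
Orthogonality of these columns says that the `Qⱼ` are unitary and that `Qⱼ† Qₗ = -Qₗ† Qⱼ` for
`j ≠ l`, which forces them to be the Pauli matrices up to phases and two fixed unitaries. The
entropy bound is a Schur–Horn argument: `w` is the diagonal of `A Aᵀ`, and `p` is its spectrum up
to zeros.
-/

section UnitaryMatrix
variable {n R : Type*} [Fintype n] [CommRing R] [StarRing R]

lemma smul_mul_mul_conjTranspose_smul {c : R} (hc : c ∈ unitary R) (A σ : Matrix n n R) :
    (c • A) * σ * (c • A)ᴴ = A * σ * Aᴴ := by
  rw [conjTranspose_smul, smul_mul_assoc, smul_mul_smul_comm, Unitary.mul_star_self_of_mem hc,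
    one_smul]

lemma mul_conj_mul_conjTranspose_of_mul_eq_smul_mul {Q F W P : Matrix n n R} {c : R}
    (hc : c ∈ unitary R) (h : Q * F = c • (W * P)) (ρ : Matrix n n R) :
    Q * (F * ρ * Fᴴ) * Qᴴ = W * (P * ρ * Pᴴ) * Wᴴ := by
  calc Q * (F * ρ * Fᴴ) * Qᴴ = (Q * F) * ρ * (Q * F)ᴴ := by
        simp only [conjTranspose_mul, mul_assoc]
    _ = (W * P) * ρ * (W * P)ᴴ := by rw [h, smul_mul_mul_conjTranspose_smul hc]
    _ = W * (P * ρ * Pᴴ) * Wᴴ := by simp only [conjTranspose_mul, mul_assoc]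

variable [DecidableEq n]

lemma mem_unitary_of_smul_mem_unitaryGroup [Nonempty n] {c : R} {V : Matrix n n R}
    (hV : V ∈ unitaryGroup n R) (hcV : c • V ∈ unitaryGroup n R) : c ∈ unitary R := by
  have h : (star c * c) • (1 : Matrix n n R) = 1 := by
    rw [← mem_unitaryGroup_iff'.1 hV, ← smul_mul_smul_comm, ← star_smul,
      mem_unitaryGroup_iff'.1 hcV, mem_unitaryGroup_iff'.1 hV]
  have hc : star c * c = 1 := by
    simpa using congrFun₂ h (Classical.arbitrary n) (Classical.arbitrary n)
  exact Unitary.mem_iff.2 ⟨hc, mul_comm c _ ▸ hc⟩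

lemma conjTranspose_eq_adjugate {V : Matrix n n R} (hV : V ∈ specialUnitaryGroup n R) :
    Vᴴ = V.adjugate := by
  obtain ⟨hV, hdet⟩ := mem_specialUnitaryGroup_iff.1 hV
  calc Vᴴ = V.adjugate * V * Vᴴ := by rw [adjugate_mul, hdet, one_smul, one_mul]
    _ = V.adjugate := by rw [mul_assoc, ← star_eq_conjTranspose, mem_unitaryGroup_iff.1 hV, mul_one]

lemma exists_smul_mem_specialUnitaryGroup [Nonempty n] {U : Matrix n n ℂ}
    (hU : U ∈ unitaryGroup n ℂ) :
    ∃ c ∈ unitary ℂ, ∃ V ∈ specialUnitaryGroup n ℂ, U = c • V := by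
  obtain ⟨c, hc⟩ := IsAlgClosed.exists_pow_nat_eq U.det (Fintype.card_pos (α := n))
  have hnorm : ‖c‖ = 1 := by
    rw [← pow_eq_one_iff_of_nonneg (norm_nonneg c) (Fintype.card_ne_zero (α := n)), ← norm_pow, hc]
    exact CStarRing.norm_of_mem_unitary (det_of_mem_unitary hU)
  have hunit : star c * c = 1 := by simp [Complex.conj_mul', hnorm]
  have hcc : c ∈ unitary ℂ := Unitary.mem_iff.2 ⟨hunit, mul_comm c _ ▸ hunit⟩
  refine ⟨c, hcc, star c • U, mem_specialUnitaryGroup_iff.2 ⟨?_, ?_⟩, ?_⟩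
  · exact Unitary.smul_mem_of_mem (Unitary.star_mem hcc) hU
  · rw [det_smul, ← hc, ← mul_pow, hunit, one_pow]
  · rw [smul_smul, mul_comm, hunit, one_smul]

end UnitaryMatrix

section OperatorNorm
variable {n : Type*} [Fintype n] [DecidableEq n]

open scoped Matrix.Norms.L2Operator in
lemma opNorm_eq_norm (A : Matrix n n ℂ) : opNorm A = ‖A‖ := rfl

open scoped Matrix.Norms.L2Operator MatrixOrder in
lemma opNorm_le_re_trace {A : Matrix n n ℂ} (hA : A.PosSemidef) :
    opNorm A ≤ A.trace.re := by
  cases isEmpty_or_nonempty n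
  · simp [opNorm_eq_norm, Subsingleton.elim A 0]
  have h : ‖A‖ ∈ spectrum ℝ A := CStarAlgebra.norm_mem_spectrum_of_nonneg hA.nonneg
  rw [hA.1.spectrum_real_eq_range_eigenvalues] at h
  obtain ⟨i, hi⟩ := h
  rw [opNorm_eq_norm, ← hi, hA.1.trace_eq_sum_eigenvalues]
  simpa using Finset.single_le_sum (fun j _ => hA.eigenvalues_nonneg j) (Finset.mem_univ i)

open scoped Matrix.Norms.L2Operator in
lemma bddAbove_range_densityMatrix {m : Type*} [Fintype m] {f : Matrix m m ℂ → ℝ}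
    (hf : Continuous f) :
    BddAbove (Set.range fun σ : {A : Matrix m m ℂ // A.PosSemidef ∧ A.trace = 1} => f σ.1) := by
  classical
  have := FiniteDimensional.proper ℂ (Matrix m m ℂ)
  refine ((isCompact_closedBall (0 : Matrix m m ℂ) 1).bddAbove_image hf.continuousOn).mono ?_
  rintro _ ⟨⟨σ, hσ, htr⟩, rfl⟩
  refine ⟨σ, mem_closedBall_zero_iff.2 ?_, rfl⟩
  simpa [htr, opNorm_eq_norm] using opNorm_le_re_trace hσ

open scoped Matrix.Norms.L2Operator in
lemma opNorm_unitary_conj {W : Matrix n n ℂ} (hW : W ∈ unitaryGroup n ℂ) (A : Matrix n n ℂ) :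
    opNorm (W * A * Wᴴ) = opNorm A := by
  rw [opNorm_eq_norm, opNorm_eq_norm, ← star_eq_conjTranspose,
    CStarRing.norm_mul_mem_unitary _ (Unitary.star_mem hW), CStarRing.norm_mem_unitary_mul _ hW]

lemma continuous_opNorm : Continuous (opNorm : Matrix n n ℂ → ℝ) :=
  (LinearMap.continuous_of_finiteDimensional
    (toEuclideanCLM (𝕜 := ℂ) (n := n)).toAlgEquiv.toLinearMap).norm

lemma opNorm_sub_smul_one_le_iSup {Φ : Matrix n n ℂ → Matrix n n ℂ} (hΦ : Continuous Φ)
    {W F M ρ : Matrix n n ℂ} (hW : W ∈ unitaryGroup n ℂ) (hF : F ∈ unitaryGroup n ℂ)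
    (hM : Φ (F * ρ * Fᴴ) = W * M * Wᴴ) (hρ : ρ.PosSemidef) (htr : ρ.trace = 1) (r : ℝ) :
    opNorm (M - r • (1 : Matrix n n ℂ)) ≤
      ⨆ σ : {m : Matrix n n ℂ // m.PosSemidef ∧ m.trace = 1},
        opNorm (Φ σ.1 - r • (1 : Matrix n n ℂ)) := by
  have htr' : (F * ρ * Fᴴ).trace = 1 := by
    rw [trace_mul_comm, ← mul_assoc, ← star_eq_conjTranspose, mem_unitaryGroup_iff'.1 hF, one_mul,
      htr]
  have hconj : Φ (F * ρ * Fᴴ) - r • 1 = W * (M - r • 1) * Wᴴ := by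
    rw [hM, mul_sub, sub_mul, mul_smul_comm, mul_one, smul_mul_assoc, ← star_eq_conjTranspose,
      mem_unitaryGroup_iff.1 hW]
  have hcont : Continuous fun σ => opNorm (Φ σ - r • (1 : Matrix n n ℂ)) :=
    continuous_opNorm.comp (hΦ.sub continuous_const)
  rw [← opNorm_unitary_conj hW, ← hconj]
  exact le_ciSup (bddAbove_range_densityMatrix hcont)
    ⟨F * ρ * Fᴴ, hρ.mul_mul_conjTranspose_same F, htr'⟩

end OperatorNorm

section Concave

lemma sum_smul_le_map_sum_of_sum_le_one {ι E : Type*} [Fintype ι] [AddCommGroup E]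
    [Module ℝ E] {s : Set E} {φ : E → ℝ} (hφ : ConcaveOn ℝ s φ) (hs : 0 ∈ s) (h0 : 0 ≤ φ 0)
    {t : ι → ℝ} {x : ι → E} (ht : ∀ i, 0 ≤ t i) (hsum : ∑ i, t i ≤ 1) (hx : ∀ i, x i ∈ s) :
    ∑ i, t i • φ (x i) ≤ φ (∑ i, t i • x i) := by
  have hv : 0 ≤ 1 - ∑ i, t i := sub_nonneg.2 hsum
  have h := hφ.map_add_sum_le (t := Finset.univ) (fun i _ => ht i) (sub_add_cancel _ _)
    (fun i _ => hx i) hv hs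
  rw [smul_zero, zero_add] at h
  exact (le_add_of_nonneg_left (smul_nonneg hv h0)).trans h

lemma nmlb_eq_negMulLog_div (x : ℝ) : nmlb x = Real.negMulLog x / Real.log 2 := by
  rw [nmlb, Real.negMulLog, Real.logb]
  ring

lemma concaveOn_nmlb : ConcaveOn ℝ (Set.Ici 0) nmlb := by
  have h := Real.concaveOn_negMulLog.smul (inv_nonneg.2 (Real.log_nonneg one_le_two))
  simpa only [smul_eq_mul, inv_mul_eq_div, ← nmlb_eq_negMulLog_div] using h

lemma nmlb_zero : nmlb 0 = 0 := by simp [nmlb]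

end Concave

section Orthogonal
variable {ι n R : Type*} [Fintype n] [DecidableEq n] [CommRing R] {O : Matrix n n R}

lemma mul_mul_transpose_mul_of_mem_orthogonalGroup (hO : O ∈ orthogonalGroup n R)
    (A : Matrix ι n R) : A * O * (A * O)ᵀ = A * Aᵀ := by
  have hOO : O * Oᵀ = 1 := (mem_orthogonalGroup_iff n R).1 hO
  rw [transpose_mul, ← Matrix.mul_assoc, Matrix.mul_assoc A, hOO, Matrix.mul_one]

lemma row_eq_sum_smul_col_of_mem_orthogonalGroup (hO : O ∈ orthogonalGroup n R)
    (A : Matrix ι n R) (k : ι) : A k = ∑ j, (A * O) k j • Oᵀ j := by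
  have hOO : O * Oᵀ = 1 := (mem_orthogonalGroup_iff n R).1 hO
  ext l
  calc A k l = (A * O * Oᵀ) k l := by rw [Matrix.mul_assoc, hOO, Matrix.mul_one]
    _ = (∑ j, (A * O) k j • Oᵀ j) l := by simp [mul_apply (N := Oᵀ)]

end Orthogonal

open scoped MatrixOrder in
lemma diag_le_one_of_isStarProjection {n 𝕜 : Type*} [Fintype n] [RCLike 𝕜]
    {H : Matrix n n 𝕜} (hH : IsStarProjection H) (i : n) : H i i ≤ 1 := by
  classical
  simpa using (le_iff.1 hH.le_one).diag_nonneg (i := i)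

section DiagonalGram
variable {ι n : Type*} [Fintype ι] [DecidableEq n]

lemma diagonal_entry_eq_sum_sq {B : Matrix ι n ℝ} {p : n → ℝ} (hB : Bᵀ * B = diagonal p) (j : n) :
    p j = ∑ k, B k j ^ 2 := by
  simpa [mul_apply, sq] using (congrFun₂ hB j j).symm

variable [Fintype n]

-- As `0⁻¹ = 0`, columns of `B` with `p j = 0` (which vanish) contribute nothing.
lemma isStarProjection_mul_diagonal_inv_mul_transpose {B : Matrix ι n ℝ} {p : n → ℝ}
    (hB : Bᵀ * B = diagonal p) : IsStarProjection (B * diagonal p⁻¹ * Bᵀ) := by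
  have hp : (fun i => p⁻¹ i * p i * p⁻¹ i) = p⁻¹ := by
    funext i
    simpa using mul_inv_mul_cancel (p i)⁻¹
  refine isStarProjection_iff'.2 ⟨?_, ?_⟩
  · calc B * diagonal p⁻¹ * Bᵀ * (B * diagonal p⁻¹ * Bᵀ)
        = B * (diagonal p⁻¹ * (Bᵀ * B) * diagonal p⁻¹) * Bᵀ := by simp only [Matrix.mul_assoc]
      _ = B * diagonal p⁻¹ * Bᵀ := by
        rw [hB, diagonal_mul_diagonal, diagonal_mul_diagonal, hp]
  · simp [star_eq_conjTranspose, Matrix.mul_assoc]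

lemma sum_eq_sum_diag_of_transpose_mul_self_eq_diagonal {B : Matrix ι n ℝ} {p : n → ℝ}
    (hB : Bᵀ * B = diagonal p) : ∑ j, p j = ∑ k, (B * Bᵀ) k k := by
  rw [← trace_diagonal, ← hB, trace_mul_comm]
  rfl

-- The weights `B k j ^ 2 / p j` sum to at most `1` along a row, being the diagonal of a projection,
-- and to `1` along a column with `p j ≠ 0`, so concavity applies row by row.
theorem sum_le_sum_diag_of_transpose_mul_self_eq_diagonal {φ : ℝ → ℝ}
    (hφ : ConcaveOn ℝ (Set.Ici 0) φ) (h0 : φ 0 = 0) {B : Matrix ι n ℝ} {p : n → ℝ}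
    (hB : Bᵀ * B = diagonal p) : ∑ j, φ (p j) ≤ ∑ k, φ ((B * Bᵀ) k k) := by
  classical
  have hp j : 0 ≤ p j := by rw [diagonal_entry_eq_sum_sq hB]; positivity
  have hzero j (hj : p j = 0) k : B k j = 0 := by
    rw [diagonal_entry_eq_sum_sq hB, Finset.sum_eq_zero_iff_of_nonneg fun k _ => sq_nonneg _] at hj
    exact pow_eq_zero_iff two_ne_zero |>.1 (hj k (Finset.mem_univ k))
  have hrow k : ∑ j, B k j ^ 2 / p j ≤ 1 := by
    refine Eq.trans_le ?_
      (diag_le_one_of_isStarProjection (isStarProjection_mul_diagonal_inv_mul_transpose hB) k)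
    rw [mul_apply]
    simp only [mul_diagonal, transpose_apply, Pi.inv_apply]
    exact Finset.sum_congr rfl fun j _ => by ring
  have hcol j : ∑ k, B k j ^ 2 / p j * φ (p j) = φ (p j) := by
    rw [← Finset.sum_mul, ← Finset.sum_div, ← diagonal_entry_eq_sum_sq hB]
    rcases eq_or_ne (p j) 0 with hj | hj
    · rw [hj, h0, mul_zero]
    · rw [div_self hj, one_mul]
  have hmean k : ∑ j, B k j ^ 2 / p j * p j = (B * Bᵀ) k k := by
    refine Finset.sum_congr rfl fun j _ => ?_
    rcases eq_or_ne (p j) 0 with hj | hj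
    · simp [hj, hzero j hj k]
    · exact (div_mul_cancel₀ _ hj).trans (sq _)
  calc ∑ j, φ (p j) = ∑ k, ∑ j, B k j ^ 2 / p j * φ (p j) := by
        rw [Finset.sum_comm]
        simp only [hcol]
    _ ≤ ∑ k, φ (∑ j, B k j ^ 2 / p j * p j) := Finset.sum_le_sum fun k _ =>
        sum_smul_le_map_sum_of_sum_le_one hφ Set.self_mem_Ici h0.ge
          (fun j => div_nonneg (sq_nonneg _) (hp j)) (hrow k) hp
    _ = ∑ k, φ ((B * Bᵀ) k k) := by simp only [hmean]

lemma exists_orthogonal_transpose_mul_self_eq_diagonal (A : Matrix ι n ℝ) :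
    ∃ O ∈ orthogonalGroup n ℝ, ∃ p : n → ℝ, (A * O)ᵀ * (A * O) = diagonal p := by
  have hA : (Aᵀ * A).IsHermitian := by
    simpa using isHermitian_conjTranspose_mul_self A
  refine ⟨hA.eigenvectorUnitary, hA.eigenvectorUnitary.2, hA.eigenvalues, ?_⟩
  have h := hA.conjStarAlgAut_star_eigenvectorUnitary
  rw [Unitary.conjStarAlgAut_star_apply] at h
  simpa [star_eq_conjTranspose, Function.comp_def, Matrix.mul_assoc] using h

lemma sum_mul_mul_conjTranspose_of_transpose_mul_self_eq_diagonal {m 𝕜 : Type*}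
    [Fintype m] [RCLike 𝕜] {B : Matrix ι n ℝ} {p : n → ℝ} (hB : Bᵀ * B = diagonal p)
    (Q : n → Matrix m m 𝕜) (σ : Matrix m m 𝕜) :
    ∑ k, (∑ j, B k j • Q j) * σ * (∑ j, B k j • Q j)ᴴ = ∑ j, p j • (Q j * σ * (Q j)ᴴ) := by
  have hentry j l : ∑ k, B k j * B k l = diagonal p j l := by
    rw [← hB, mul_apply]
    rfl
  calc ∑ k, (∑ j, B k j • Q j) * σ * (∑ j, B k j • Q j)ᴴ
      = ∑ k, ∑ j, ∑ l, (B k j * B k l) • (Q j * σ * (Q l)ᴴ) := by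
        refine Finset.sum_congr rfl fun k _ => ?_
        rw [conjTranspose_sum, Finset.sum_mul, Finset.sum_mul_sum]
        simp_rw [conjTranspose_smul, star_trivial, smul_mul_assoc _ _ σ, smul_mul_smul_comm]
    _ = ∑ j, ∑ l, diagonal p j l • (Q j * σ * (Q l)ᴴ) := by
        rw [Finset.sum_comm]
        refine Finset.sum_congr rfl fun j _ => ?_
        rw [Finset.sum_comm]
        simp only [← Finset.sum_smul, hentry]
    _ = ∑ j, p j • (Q j * σ * (Q j)ᴴ) := by simp [diagonal_apply, ite_smul]

end DiagonalGram

/-- The Pauli basis `I, X, Y, Z`, indexed in the order of the weights of a Pauli scheme. -/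
def pauli : Fin 4 → Matrix (Fin 2) (Fin 2) ℂ := ![1, PX, PY, PZ]

lemma isHermitian_pauli (j : Fin 4) : (pauli j).IsHermitian := by
  ext a b
  fin_cases j <;> fin_cases a <;> fin_cases b <;> simp [pauli, PX, PY, PZ]

lemma pauli_mul_self (j : Fin 4) : pauli j * pauli j = 1 := by
  ext a b
  fin_cases j <;> fin_cases a <;> fin_cases b <;> simp [pauli, PX, PY, PZ]

lemma pauli_mem_unitaryGroup (j : Fin 4) : pauli j ∈ unitaryGroup (Fin 2) ℂ := by
  rw [mem_unitaryGroup_iff, star_eq_conjTranspose, isHermitian_pauli, pauli_mul_self]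

lemma PX_mul_PY : PX * PY = -(PY * PX) := by
  ext a b
  fin_cases a <;> fin_cases b <;> simp [PX, PY]

lemma PZ_mul_PY : PZ * PY = -(PY * PZ) := by
  ext a b
  fin_cases a <;> fin_cases b <;> simp [PY, PZ]

lemma eq_smul_one_of_commute_PX_of_commute_PZ {S : Matrix (Fin 2) (Fin 2) ℂ}
    (hX : Commute S PX) (hZ : Commute S PZ) : S = S 0 0 • (1 : Matrix (Fin 2) (Fin 2) ℂ) := by
  have h00 : S 0 0 = S 1 1 := by
    simpa [PX, mul_apply, Fin.sum_univ_two] using congrFun₂ hX.eq 0 1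
  have h01 : S 0 1 = 0 := by
    simpa [PZ, mul_apply, Fin.sum_univ_two, neg_eq_self] using congrFun₂ hZ.eq 0 1
  have h10 : S 1 0 = 0 := by
    simpa [PZ, mul_apply, Fin.sum_univ_two, self_eq_neg] using congrFun₂ hZ.eq 1 0
  ext a b
  fin_cases a <;> fin_cases b <;> simp [h01, h10, h00]

lemma exists_eq_smul_PY_of_anticommute {D : Matrix (Fin 2) (Fin 2) ℂ}
    (hX : D * PX = -(PX * D)) (hZ : D * PZ = -(PZ * D)) : ∃ c : ℂ, D = c • PY := by
  have hYX : Commute (D * PY) PX := by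
    rw [commute_iff_eq, mul_assoc, ← neg_eq_iff_eq_neg.2 PX_mul_PY, mul_neg, ← mul_assoc, hX,
      neg_mul, neg_neg, mul_assoc]
  have hYZ : Commute (D * PY) PZ := by
    rw [commute_iff_eq, mul_assoc, ← neg_eq_iff_eq_neg.2 PZ_mul_PY, mul_neg, ← mul_assoc, hZ,
      neg_mul, neg_neg, mul_assoc]
  refine ⟨(D * PY) 0 0, ?_⟩
  calc D = D * PY * PY := by rw [mul_assoc, show PY * PY = 1 from pauli_mul_self 2, mul_one]
    _ = (D * PY) 0 0 • PY := by
      conv_lhs => rw [eq_smul_one_of_commute_PX_of_commute_PZ hYX hYZ, smul_mul_assoc, one_mul]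

section Intertwining
variable {n R : Type*} [Fintype n] [Ring R] [StarRing R]

lemma conjTranspose_mul_eq_mul_conjTranspose_of_mul_eq_mul {A P F : Matrix n n R}
    (hA : A.IsHermitian) (hP : P.IsHermitian) (h : A * F = F * P) : Fᴴ * A = P * Fᴴ := by
  simpa [hA.eq, hP.eq] using congrArg conjTranspose h

lemma commute_conjTranspose_mul_self {A P F : Matrix n n R} (hA : A.IsHermitian)
    (hP : P.IsHermitian) (h : A * F = F * P) : Commute (Fᴴ * F) P := by
  rw [commute_iff_eq, mul_assoc, ← h, ← mul_assoc,
    conjTranspose_mul_eq_mul_conjTranspose_of_mul_eq_mul hA hP h, mul_assoc]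

lemma anticommute_conjTranspose_mul_mul {A B P F : Matrix n n R} (hA : A.IsHermitian)
    (hP : P.IsHermitian) (h : A * F = F * P) (hBA : B * A = -(A * B)) :
    Fᴴ * B * F * P = -(P * (Fᴴ * B * F)) := by
  calc Fᴴ * B * F * P = Fᴴ * (B * A) * F := by simp only [mul_assoc, h]
    _ = -(Fᴴ * A * B * F) := by rw [hBA]; noncomm_ring
    _ = -(P * (Fᴴ * B * F)) := by
      rw [conjTranspose_mul_eq_mul_conjTranspose_of_mul_eq_mul hA hP h]
      simp only [mul_assoc]

lemma exists_unit_fixed_vector_of_mul_self_eq_one {𝕜 : Type*} [RCLike 𝕜] [DecidableEq n]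
    {B : Matrix n n 𝕜} (hBB : B * B = 1) (hB : B ≠ -1) : ∃ v, star v ⬝ᵥ v = 1 ∧ B *ᵥ v = v := by
  obtain ⟨x, hx⟩ : ∃ x, (1 + B) *ᵥ x ≠ 0 := by
    by_contra! h
    exact hB (neg_eq_of_add_eq_zero_right (ext_of_mulVec_single fun j => by
      rw [h, zero_mulVec])).symm
  set y := WithLp.toLp 2 ((1 + B) *ᵥ x) with hy
  have hy0 : y ≠ 0 := by simpa [hy] using hx
  have hBy : B *ᵥ y.ofLp = y.ofLp := by
    rw [hy, mulVec_mulVec, mul_add, hBB, mul_one, add_comm]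
  have hnorm : ‖(‖y‖⁻¹ : 𝕜) • y‖ = 1 := by simpa using norm_smul_inv_norm (𝕜 := 𝕜) hy0
  refine ⟨((‖y‖⁻¹ : 𝕜) • y).ofLp, ?_, ?_⟩
  · rw [dotProduct_comm, ← EuclideanSpace.inner_eq_star_dotProduct, inner_self_eq_norm_sq_to_K,
      hnorm]
    simp
  · rw [WithLp.ofLp_smul, mulVec_smul, hBy]

end Intertwining

lemma exists_unitary_intertwining_PX_PZ {A B : Matrix (Fin 2) (Fin 2) ℂ} (hA : A.IsHermitian)
    (hB : B.IsHermitian) (hAA : A * A = 1) (hBB : B * B = 1) (hAB : A * B = -(B * A)) :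
    ∃ F ∈ unitaryGroup (Fin 2) ℂ, A * F = F * PX ∧ B * F = F * PZ := by
  have hB1 : B ≠ -1 := by
    rintro rfl
    have hA0 : A = 0 := by
      ext i j
      simpa [neg_eq_self] using congrFun₂ hAB i j
    simp [hA0] at hAA
  obtain ⟨v, hv, hBv⟩ := exists_unit_fixed_vector_of_mul_self_eq_one hBB hB1
  have hAAv : A *ᵥ (A *ᵥ v) = v := by rw [mulVec_mulVec, hAA, one_mulVec]
  have hBAv : B *ᵥ (A *ᵥ v) = -(A *ᵥ v) := by
    rw [mulVec_mulVec, ← neg_eq_iff_eq_neg.2 hAB, neg_mulVec, ← mulVec_mulVec, hBv]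
  let F : Matrix (Fin 2) (Fin 2) ℂ := (of ![v, A *ᵥ v])ᵀ
  have hAF : A * F = F * PX := by
    ext i j
    have h := congrFun hAAv i
    fin_cases j
    · fin_cases i <;> simp [F, PX, mul_apply]
    · simpa [F, PX, mul_apply, mulVec, dotProduct] using h
  have hBF : B * F = F * PZ := by
    ext i j
    have h := congrFun hBv i
    have h' := congrFun hBAv i
    fin_cases j
    · simpa [F, PZ, mul_apply, mulVec, dotProduct] using h
    · simpa [F, PZ, mul_apply, mulVec, dotProduct] using h'
  refine ⟨F, mem_unitaryGroup_iff'.2 ?_, hAF, hBF⟩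
  have hFF : (Fᴴ * F) 0 0 = 1 := hv
  rw [star_eq_conjTranspose, eq_smul_one_of_commute_PX_of_commute_PZ
    (commute_conjTranspose_mul_self hA (isHermitian_pauli 1) hAF)
    (commute_conjTranspose_mul_self hB (isHermitian_pauli 3) hBF), hFF, one_smul]

lemma exists_unitary_intertwining_pauli {A B C : Matrix (Fin 2) (Fin 2) ℂ}
    (hA : A.IsHermitian) (hC : C.IsHermitian)
    (hAA : A * A = 1) (hB : B ∈ unitaryGroup (Fin 2) ℂ) (hCC : C * C = 1)
    (hAC : A * C = -(C * A)) (hBA : B * A = -(A * B)) (hBC : B * C = -(C * B)) :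
    ∃ F ∈ unitaryGroup (Fin 2) ℂ,
      A * F = F * PX ∧ (∃ c ∈ unitary ℂ, B * F = c • (F * PY)) ∧ C * F = F * PZ := by
  obtain ⟨F, hF, hAF, hCF⟩ := exists_unitary_intertwining_PX_PZ hA hC hAA hCC hAC
  obtain ⟨c, hc⟩ := exists_eq_smul_PY_of_anticommute
    (anticommute_conjTranspose_mul_mul hA (isHermitian_pauli 1) hAF hBA)
    (anticommute_conjTranspose_mul_mul hC (isHermitian_pauli 3) hCF hBC)
  have hBF : B * F = c • (F * PY) := by
    calc B * F = F * Fᴴ * B * F := by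
          rw [← star_eq_conjTranspose, mem_unitaryGroup_iff.1 hF, one_mul]
      _ = F * (Fᴴ * B * F) := by simp only [mul_assoc]
      _ = c • (F * PY) := by rw [hc, mul_smul_comm]
  have hFY : F * PY ∈ unitaryGroup (Fin 2) ℂ := mul_mem hF (pauli_mem_unitaryGroup 2)
  exact ⟨F, hF, hAF, ⟨c, mem_unitary_of_smul_mem_unitaryGroup hFY (hBF ▸ mul_mem hB hF), hBF⟩, hCF⟩

-- For `j ≠ 0` the matrices `i Q₀† Qⱼ` are Hermitian, square to `1` and anticommute, like `X, Y, Z`.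
theorem exists_unitary_mul_eq_smul_mul_pauli {Q : Fin 4 → Matrix (Fin 2) (Fin 2) ℂ}
    (hQ : ∀ j, Q j ∈ unitaryGroup (Fin 2) ℂ)
    (hanti : Pairwise fun j l => (Q j)ᴴ * Q l = -((Q l)ᴴ * Q j)) :
    ∃ W ∈ unitaryGroup (Fin 2) ℂ, ∃ F ∈ unitaryGroup (Fin 2) ℂ,
      ∀ j, ∃ c ∈ unitary ℂ, Q j * F = c • (W * pauli j) := by
  have h00 : Q 0 * (Q 0)ᴴ = 1 := mem_unitaryGroup_iff.1 (hQ 0)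
  have hI : Complex.I ∈ unitary ℂ := by simp [Unitary.mem_iff]
  set A : Fin 4 → Matrix (Fin 2) (Fin 2) ℂ := fun j => Complex.I • ((Q 0)ᴴ * Q j) with hA
  have hAU j : A j ∈ unitaryGroup (Fin 2) ℂ :=
    Unitary.smul_mem_of_mem hI (mul_mem (Unitary.star_mem (hQ 0)) (hQ j))
  have hAH j (hj : j ≠ 0) : (A j).IsHermitian := by
    simp [IsHermitian, hA, hanti hj]
  have hAmul j l (hj : j ≠ 0) : A j * A l = (Q j)ᴴ * Q l := by
    calc A j * A l = (A j)ᴴ * A l := by rw [hAH j hj]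
      _ = (Q j)ᴴ * (Q 0 * (Q 0)ᴴ) * Q l := by simp [hA, smul_smul, mul_assoc]
      _ = (Q j)ᴴ * Q l := by rw [h00, mul_one]
  have hAsq j (hj : j ≠ 0) : A j * A j = 1 := by
    rw [hAmul j j hj]; exact mem_unitaryGroup_iff'.1 (hQ j)
  have hAanti j l (hj : j ≠ 0) (hl : l ≠ 0) (hjl : j ≠ l) : A j * A l = -(A l * A j) := by
    rw [hAmul j l hj, hAmul l j hl, hanti hjl]
  have hQA j : Q j = star Complex.I • (Q 0 * A j) := by
    simp [hA, smul_smul, ← mul_assoc, h00]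
  obtain ⟨F, hF, hX, ⟨c, hc, hY⟩, hZ⟩ := exists_unitary_intertwining_pauli
    (hAH 1 (by decide)) (hAH 3 (by decide)) (hAsq 1 (by decide)) (hAU 2) (hAsq 3 (by decide))
    (hAanti 1 3 (by decide) (by decide) (by decide))
    (hAanti 2 1 (by decide) (by decide) (by decide))
    (hAanti 2 3 (by decide) (by decide) (by decide))
  refine ⟨Q 0 * F, mul_mem (hQ 0) hF, F, hF, fun j => ?_⟩
  fin_cases j
  · exact ⟨1, one_mem _, by simp [pauli]⟩
  · refine ⟨star Complex.I, Unitary.star_mem hI, ?_⟩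
    rw [hQA]
    simp [pauli, mul_assoc, hX]
  · refine ⟨star Complex.I * c, mul_mem (Unitary.star_mem hI) hc, ?_⟩
    rw [hQA]
    simp [pauli, mul_assoc, hY, smul_smul]
  · refine ⟨star Complex.I, Unitary.star_mem hI, ?_⟩
    rw [hQA]
    simp [pauli, mul_assoc, hZ]

/-- The matrix `q₀ + i (q₁ X + q₂ Y + q₃ Z)` of the real quaternion with coordinates `q`. Unit
quaternions give exactly the matrices of `SU(2)`. -/
def quaternionMatrix : (Fin 4 → ℝ) →ₗ[ℝ] Matrix (Fin 2) (Fin 2) ℂ :=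
  Fintype.linearCombination ℝ
    ![1, Complex.I • PX, Complex.I • PY, Complex.I • PZ]

lemma quaternionMatrix_apply (q : Fin 4 → ℝ) :
    quaternionMatrix q =
      !![(q 0 : ℂ) + q 3 * Complex.I, (q 2 : ℂ) + q 1 * Complex.I;
        -(q 2 : ℂ) + q 1 * Complex.I, (q 0 : ℂ) - q 3 * Complex.I] := by
  ext i j
  fin_cases i <;> fin_cases j <;>
    simp [quaternionMatrix, Fintype.linearCombination_apply, Fin.sum_univ_four, PX, PY, PZ,
      Complex.ext_iff]

lemma quaternionMatrix_conjTranspose_mul_add (q r : Fin 4 → ℝ) :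
    (quaternionMatrix q)ᴴ * quaternionMatrix r + (quaternionMatrix r)ᴴ * quaternionMatrix q =
      (2 * q ⬝ᵥ r) • (1 : Matrix (Fin 2) (Fin 2) ℂ) := by
  ext i j
  fin_cases i <;> fin_cases j <;> apply Complex.ext <;>
    simp [quaternionMatrix_apply, mul_apply, dotProduct, Fin.sum_univ_succ] <;> ring

lemma quaternionMatrix_conjTranspose_mul_self (q : Fin 4 → ℝ) :
    (quaternionMatrix q)ᴴ * quaternionMatrix q = (q ⬝ᵥ q) • (1 : Matrix (Fin 2) (Fin 2) ℂ) := by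
  have h := quaternionMatrix_conjTranspose_mul_add q q
  rw [← two_smul ℝ, mul_smul] at h
  exact smul_right_injective _ two_ne_zero h

lemma quaternionMatrix_mem_unitaryGroup_iff {q : Fin 4 → ℝ} :
    quaternionMatrix q ∈ unitaryGroup (Fin 2) ℂ ↔ q ⬝ᵥ q = 1 := by
  rw [mem_unitaryGroup_iff', star_eq_conjTranspose, quaternionMatrix_conjTranspose_mul_self]
  refine ⟨fun h => ?_, fun h => by rw [h, one_smul]⟩
  simpa using congrArg (fun A : Matrix (Fin 2) (Fin 2) ℂ => (A 0 0).re) h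

lemma exists_quaternionMatrix_eq {V : Matrix (Fin 2) (Fin 2) ℂ}
    (hV : V ∈ specialUnitaryGroup (Fin 2) ℂ) : ∃ q, quaternionMatrix q = V := by
  have h := conjTranspose_eq_adjugate hV
  rw [adjugate_fin_two] at h
  have h11 : star (V 0 0) = V 1 1 := congrFun₂ h 0 0
  have h10 : star (V 0 1) = -V 1 0 := congrFun₂ h 1 0
  refine ⟨![(V 0 0).re, (V 0 1).im, (V 0 1).re, (V 0 0).im], ?_⟩
  rw [quaternionMatrix_apply, eta_fin_two V, ← h11, ← neg_eq_iff_eq_neg.2 h10]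
  ext i j
  fin_cases i <;> fin_cases j <;> simp [Complex.ext_iff]

lemma exists_unit_quaternionMatrix_of_mem_unitaryGroup {U : Matrix (Fin 2) (Fin 2) ℂ}
    (hU : U ∈ unitaryGroup (Fin 2) ℂ) :
    ∃ c ∈ unitary ℂ, ∃ q : Fin 4 → ℝ, q ⬝ᵥ q = 1 ∧ U = c • quaternionMatrix q := by
  obtain ⟨c, hc, V, hV, rfl⟩ := exists_smul_mem_specialUnitaryGroup hU
  obtain ⟨q, rfl⟩ := exists_quaternionMatrix_eq hV
  exact ⟨c, hc, q,
    quaternionMatrix_mem_unitaryGroup_iff.1 (specialUnitaryGroup_le_unitaryGroup hV), rfl⟩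

lemma quaternionMatrix_conjTranspose_mul_of_dotProduct_eq_zero {q r : Fin 4 → ℝ}
    (h : q ⬝ᵥ r = 0) : (quaternionMatrix q)ᴴ * quaternionMatrix r =
      -((quaternionMatrix r)ᴴ * quaternionMatrix q) := by
  rw [eq_neg_iff_add_eq_zero, quaternionMatrix_conjTranspose_mul_add, h, mul_zero, zero_smul]

lemma exists_unitary_quaternionMatrix_mul_eq_smul_mul_pauli {O : Matrix (Fin 4) (Fin 4) ℝ}
    (hO : O ∈ orthogonalGroup (Fin 4) ℝ) :
    ∃ W ∈ unitaryGroup (Fin 2) ℂ, ∃ F ∈ unitaryGroup (Fin 2) ℂ,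
      ∀ j, ∃ c ∈ unitary ℂ, quaternionMatrix (Oᵀ j) * F = c • (W * pauli j) := by
  have hdot j l : Oᵀ j ⬝ᵥ Oᵀ l = (1 : Matrix (Fin 4) (Fin 4) ℝ) j l :=
    congrFun₂ ((mem_orthogonalGroup_iff' (Fin 4) ℝ).1 hO) j l
  refine exists_unitary_mul_eq_smul_mul_pauli
    (fun j => quaternionMatrix_mem_unitaryGroup_iff.2 ?_)
    fun j l hjl => quaternionMatrix_conjTranspose_mul_of_dotProduct_eq_zero ?_
  · rw [hdot, one_apply_eq]
  · rw [hdot, one_apply_ne hjl]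

lemma smul_mul_mul_conjTranspose_eq_quaternionMatrix_sqrt_smul {c : ℂ} (hc : c ∈ unitary ℂ)
    {w : ℝ} (hw : 0 ≤ w) (q : Fin 4 → ℝ) (σ : Matrix (Fin 2) (Fin 2) ℂ) :
    w • (c • quaternionMatrix q * σ * (c • quaternionMatrix q)ᴴ) =
      quaternionMatrix (√w • q) * σ * (quaternionMatrix (√w • q))ᴴ := by
  rw [smul_mul_mul_conjTranspose_smul hc, map_smul, conjTranspose_smul, star_trivial,
    smul_mul_assoc, smul_mul_smul_comm, Real.mul_self_sqrt hw]

lemma sum_smul_pauli_conj (p : Fin 4 → ℝ) (ρ : Matrix (Fin 2) (Fin 2) ℂ) :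
    ∑ j, p j • (pauli j * ρ * (pauli j)ᴴ) =
      p 0 • ρ + p 1 • (PX * ρ * PX) + p 2 • (PY * ρ * PY) + p 3 • (PZ * ρ * PZ) := by
  simp only [(isHermitian_pauli _).eq, Fin.sum_univ_four]
  simp [pauli]

theorem pauli_schemes_optimal_general {ι : Type*} [Fintype ι]
    (U : ι → Matrix (Fin 2) (Fin 2) ℂ) (hU : ∀ k, U k ∈ unitaryGroup (Fin 2) ℂ)
    (w : ι → ℝ) (hw : ∀ k, 0 ≤ w k) :
    ∃ p : Fin 4 → ℝ, (∀ i, 0 ≤ p i) ∧ ∑ i, p i = ∑ k, w k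
      ∧ (∀ φ : ℝ → ℝ, ConcaveOn ℝ (Set.Ici 0) φ → φ 0 = 0 → ∑ i, φ (p i) ≤ ∑ k, φ (w k))
      ∧ ∃ W ∈ unitaryGroup (Fin 2) ℂ, ∃ F ∈ unitaryGroup (Fin 2) ℂ,
          ∀ ρ : Matrix (Fin 2) (Fin 2) ℂ,
            ∑ k, w k • (U k * (F * ρ * Fᴴ) * (U k)ᴴ) =
              W * (p 0 • ρ + p 1 • (PX * ρ * PX) + p 2 • (PY * ρ * PY) + p 3 • (PZ * ρ * PZ))
                * Wᴴ := by
  choose c hc q hq hUq using fun k => exists_unit_quaternionMatrix_of_mem_unitaryGroup (hU k)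
  let A : Matrix ι (Fin 4) ℝ := of fun k => √(w k) • q k
  obtain ⟨O, hO, p, hp⟩ := exists_orthogonal_transpose_mul_self_eq_diagonal A
  have hdiag k : (A * O * (A * O)ᵀ) k k = w k := by
    rw [mul_mul_transpose_mul_of_mem_orthogonalGroup hO]
    change √(w k) • q k ⬝ᵥ √(w k) • q k = w k
    rw [smul_dotProduct, dotProduct_smul, hq, smul_smul, Real.mul_self_sqrt (hw k), smul_eq_mul,
      mul_one]
  have hrow k : quaternionMatrix (√(w k) • q k) =
      ∑ j, (A * O) k j • quaternionMatrix (Oᵀ j) := by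
    rw [show √(w k) • q k = A k from rfl, row_eq_sum_smul_col_of_mem_orthogonalGroup hO A k]
    simp only [map_sum, map_smul]
  obtain ⟨W, hW, F, hF, hWF⟩ := exists_unitary_quaternionMatrix_mul_eq_smul_mul_pauli hO
  choose d hd hQF using hWF
  refine ⟨p, fun j => ?_, ?_, fun φ hφ h0 => ?_, W, hW, F, hF, fun ρ => ?_⟩
  · rw [diagonal_entry_eq_sum_sq hp]
    positivity
  · rw [sum_eq_sum_diag_of_transpose_mul_self_eq_diagonal hp]
    simp only [hdiag]
  · simpa only [hdiag] using sum_le_sum_diag_of_transpose_mul_self_eq_diagonal hφ h0 hp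
  · calc ∑ k, w k • (U k * (F * ρ * Fᴴ) * (U k)ᴴ)
        = ∑ j, p j • (quaternionMatrix (Oᵀ j) * (F * ρ * Fᴴ) * (quaternionMatrix (Oᵀ j))ᴴ) := by
          rw [← sum_mul_mul_conjTranspose_of_transpose_mul_self_eq_diagonal hp]
          simp only [hUq, smul_mul_mul_conjTranspose_eq_quaternionMatrix_sqrt_smul (hc _) (hw _),
            hrow]
      _ = W * (∑ j, p j • (pauli j * ρ * (pauli j)ᴴ)) * Wᴴ := by
          simp only [mul_conj_mul_conjTranspose_of_mul_eq_smul_mul (hd _) (hQF _),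
            Finset.mul_sum, Finset.sum_mul, mul_smul_comm, smul_mul_assoc]
      _ = _ := by rw [sum_smul_pauli_conj]

/-- Pauli encryption schemes are no worse than general single-qubit encryption schemes: any
scheme `E(ρ) = Σₖ wₖ Uₖ ρ Uₖ†` can be replaced by a Pauli scheme
`P(ρ) = p₀ρ + p₁XρX + p₂YρY + p₃ZρZ` using no more Shannon entropy and achieving
worst-case operator-norm approximation at least as good. -/
theorem pauli_schemes_optimal (N : ℕ) (hN : 1 ≤ N)
    (U : Fin N → Matrix (Fin 2) (Fin 2) ℂ)
    (hU : ∀ k, U k ∈ Matrix.unitaryGroup (Fin 2) ℂ)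
    (w : Fin N → ℝ) (hw : ∀ k, 0 ≤ w k) (hsum : ∑ k, w k = 1) :
    ∃ p : Fin 4 → ℝ, (∀ i, 0 ≤ p i) ∧ (∑ i, p i = 1)
      ∧ (∑ i, nmlb (p i)) ≤ (∑ k, nmlb (w k))
      ∧ ∀ ρ : Matrix (Fin 2) (Fin 2) ℂ, ρ.PosSemidef → ρ.trace = 1 →
          opNorm (p 0 • ρ + p 1 • (PX * ρ * PX) + p 2 • (PY * ρ * PY) + p 3 • (PZ * ρ * PZ)
              - (1/2 : ℝ) • (1 : Matrix (Fin 2) (Fin 2) ℂ))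
            ≤ ⨆ σ : {m : Matrix (Fin 2) (Fin 2) ℂ // m.PosSemidef ∧ m.trace = 1},
                opNorm ((∑ k, w k • (U k * σ.1 * (U k)ᴴ))
                  - (1/2 : ℝ) • (1 : Matrix (Fin 2) (Fin 2) ℂ)) := by
  obtain ⟨p, hp, hpsum, hφ, W, hW, F, hF, h⟩ := pauli_schemes_optimal_general U hU w hw
  exact ⟨p, hp, hpsum.trans hsum, hφ nmlb concaveOn_nmlb nmlb_zero, fun ρ hρ htr =>
    opNorm_sub_smul_one_le_iSup (Φ := fun σ => ∑ k, w k • (U k * σ * (U k)ᴴ)) (by fun_prop)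
      hW hF (h ρ) hρ htr _⟩

end
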